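/- For the alternating layered ansatz on n = mκ qubits with L layers, whose m-qubit unitary blocks are independently Haar-random (2-designs), the variance of the fidelity kernel Tr[U ρ₀ U† σ] (with ρ₀ pure and σ a fixed state) over all blocks of U satisfies Var[k_Q] ≤ 2^κ/(2^{2m}−1)^κ − 1/2^{2n}, which is approximately 2^{−n(2 − 1/m)} for 2^m ≫ 1. -/

import Mathlib

open MeasureTheory Matrix
open scoped ComplexOrder

/-- Embed an `m`-qubit operator `W` so that it acts on the qubits listed by `pos`
(and as the identity on all other qubits) of an `n`-qubit register. -/
noncomputable def embedBlock {n m : ℕ} (pos : Fin m → Fin n)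
    (W : Matrix (Fin m → Bool) (Fin m → Bool) ℂ) :
    Matrix (Fin n → Bool) (Fin n → Bool) ℂ :=
  fun i j =>
    if ∀ q : Fin n, q ∉ Set.range pos → i q = j q then W (i ∘ pos) (j ∘ pos) else 0

/-- Qubit positions of the `k`-th `m`-qubit block in the `d`-th layer of the alternating
layered ansatz on `m·κ` qubits: consecutive blocks of `m` qubits, cyclically shifted by
`m/2` in every other layer (so that each block overlaps `m/2` qubits of each of the two
neighbouring blocks of the previous layer). -/
def blockPos (m κ : ℕ) (h : 0 < m * κ) (d k : ℕ) (t : Fin m) : Fin (m * κ) :=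
  ⟨(k * m + d % 2 * (m / 2) + t.val) % (m * κ), Nat.mod_lt _ h⟩

/-- The alternating layered ansatz: the product over `L` layers of the `κ` embedded
`m`-qubit unitary blocks of each layer. -/
noncomputable def alaCircuit (m κ L : ℕ) (h : 0 < m * κ)
    (Ws : Fin L → Fin κ → Matrix (Fin m → Bool) (Fin m → Bool) ℂ) :
    Matrix (Fin (m * κ) → Bool) (Fin (m * κ) → Bool) ℂ :=
  (List.finRange L).foldl
    (fun M d =>
      ((List.finRange κ).foldl
        (fun N k => embedBlock (blockPos m κ h d.val k.val) (Ws d k) * N) 1) * M) 1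

/-!
By left invariance of Haar measure, multiplying the last layer by fresh independent Haar blocks does
not change the law of the circuit. Conditionally on the old circuit `V`, the kernel is then that of
a single layer, a tensor product of `κ` independent Haar unitaries of size `N = 2 ^ m`, applied to
the state `V ρ V†`. Factoring both states turns the kernel into a sum `∑ p, |⟨A p, W⟩|²` of squared
bilinear forms, whose moments are controlled by `∑ p, ‖A p‖²` one tensor factor at a time.

For one factor, the singular value decomposition and bi-invariance make `A p` diagonal, and
averaging over the phases of single rows removes all cross terms, leaving the moments
`E |W i i|² = 1 / N`, `E |W i i|⁴ = 2 / (N (N + 1))` and `E |W i i|² |W k k|² = 1 / (N² - 1)` for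
`i ≠ k`. Minkowski's inequality in `L²` then gives the factor `2 / (N² - 1)` for the sum over `p`.
-/

section Integration

lemma integrable_of_continuous {X E : Type*} [TopologicalSpace X] [CompactSpace X]
    [MeasurableSpace X] [OpensMeasurableSpace X] [NormedAddCommGroup E]
    [SecondCountableTopologyEither X E] (μ : Measure X) [IsFiniteMeasure μ] {f : X → E}
    (hf : Continuous f) : Integrable f μ :=
  hf.integrable_of_hasCompactSupport (HasCompactSupport.of_compactSpace f)

lemma lpNorm_two_sq {Ω : Type*} [MeasurableSpace Ω] {ν : Measure Ω} {f : Ω → ℝ}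
    (hf : AEStronglyMeasurable f ν) : lpNorm f 2 ν ^ 2 = ∫ ω, f ω ^ 2 ∂ν := by
  rw [lpNorm_eq_integral_norm_rpow_toReal two_ne_zero ENNReal.ofNat_ne_top hf, ENNReal.toReal_ofNat]
  simp only [Real.rpow_ofNat, Real.norm_eq_abs, sq_abs]
  rw [← Real.rpow_mul_natCast (integral_nonneg fun ω => sq_nonneg (f ω))]
  norm_num

lemma integral_sum_sq_le {Ω I : Type*} [MeasurableSpace Ω] [Fintype I] {ν : Measure Ω}
    {y : I → Ω → ℝ} (hy : ∀ i, MemLp (y i) 2 ν) {c : I → ℝ} (hc : ∀ i, 0 ≤ c i) {K : ℝ}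
    (hK : 0 ≤ K) (h : ∀ i, ∫ ω, y i ω ^ 2 ∂ν ≤ K * c i ^ 2) :
    ∫ ω, (∑ i, y i ω) ^ 2 ∂ν ≤ K * (∑ i, c i) ^ 2 := by
  have hnorm (i : I) : lpNorm (y i) 2 ν ≤ √K * c i := by
    rw [← Real.sqrt_sq (hc i), ← Real.sqrt_mul' K (sq_nonneg _)]
    exact Real.le_sqrt_of_sq_le ((lpNorm_two_sq (hy i).1).trans_le (h i))
  calc ∫ ω, (∑ i, y i ω) ^ 2 ∂ν = lpNorm (∑ i, y i) 2 ν ^ 2 := by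
        rw [lpNorm_two_sq (Finset.aestronglyMeasurable_sum _ fun i _ => (hy i).1)]
        simp only [Finset.sum_apply]
    _ ≤ (∑ i, √K * c i) ^ 2 := by
        refine pow_le_pow_left₀ lpNorm_nonneg ?_ 2
        exact (lpNorm_sum_le (fun i _ => hy i) one_le_two).trans
          (Finset.sum_le_sum fun i _ => hnorm i)
    _ = K * (∑ i, c i) ^ 2 := by rw [← Finset.mul_sum, mul_pow, Real.sq_sqrt hK]

lemma integral_eq_integral_integral_mul {X H : Type*} [TopologicalSpace X] [CompactSpace X]
    [SecondCountableTopology X] [MeasurableSpace X] [BorelSpace X] [Group H] [TopologicalSpace H]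
    [IsTopologicalGroup H] [CompactSpace H] [SecondCountableTopology H] [MeasurableSpace H]
    [BorelSpace H] (η : Measure X) [IsProbabilityMeasure η] (ν : Measure H) [IsFiniteMeasure ν]
    [ν.IsMulLeftInvariant] {φ : X → H} (hφ : Continuous φ) {F : H → ℝ} (hF : Continuous F) :
    ∫ W, F W ∂ν = ∫ W, ∫ x, F (φ x * W) ∂η ∂ν := by
  have hint : Integrable (Function.uncurry fun W x => F (φ x * W)) (ν.prod η) :=
    integrable_of_continuous _ (by unfold Function.uncurry; fun_prop)
  rw [integral_integral_swap hint]
  simp only [integral_mul_left_eq_self, integral_const, probReal_univ, one_smul]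

end Integration

section PhaseAveraging

open Complex (I)

lemma sum_norm_add_I_pow_mul_sq (x y : ℂ) :
    ∑ k ∈ Finset.range 4, ‖x + I ^ k * y‖ ^ 2 = 4 * (‖x‖ ^ 2 + ‖y‖ ^ 2) := by
  simp only [Finset.sum_range_succ, Finset.sum_range_zero, pow_zero, pow_one, Complex.I_sq,
    Complex.I_pow_three, Complex.sq_norm, Complex.normSq_apply]
  simp only [Complex.add_re, Complex.add_im, Complex.mul_re, Complex.mul_im, Complex.I_re,
    Complex.I_im, Complex.neg_re, Complex.neg_im, Complex.one_re, Complex.one_im]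
  ring

lemma sum_norm_add_I_pow_mul_pow_four (x y : ℂ) :
    ∑ k ∈ Finset.range 4, ‖x + I ^ k * y‖ ^ 4
      = 4 * (‖x‖ ^ 4 + ‖y‖ ^ 4 + 4 * (‖x‖ ^ 2 * ‖y‖ ^ 2)) := by
  have hpow (z : ℂ) : ‖z‖ ^ 4 = (‖z‖ ^ 2) ^ 2 := pow_mul ‖z‖ 2 2
  simp only [hpow, Finset.sum_range_succ, Finset.sum_range_zero, pow_zero, pow_one, Complex.I_sq,
    Complex.I_pow_three, Complex.sq_norm, Complex.normSq_apply]
  simp only [Complex.add_re, Complex.add_im, Complex.mul_re, Complex.mul_im, Complex.I_re,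
    Complex.I_im, Complex.neg_re, Complex.neg_im, Complex.one_re, Complex.one_im]
  ring

/-- A phase family: functions `z i` on a group, each of which picks up the phase `I` under left
translation by its own group element `p i` and is fixed by the translations by the other `p j`. -/
def IsPhaseFamily {G ι : Type*} [Mul G] [DecidableEq ι] (p : ι → G) (z : ι → G → ℂ) : Prop :=
  ∀ i j W, z i (p j * W) = (if i = j then I else 1) * z i W

namespace IsPhaseFamily

variable {G ι : Type*} [Mul G] [DecidableEq ι] {p : ι → G} {z : ι → G → ℂ}

lemma apply_mul_self (h : IsPhaseFamily p z) (i : ι) (W : G) : z i (p i * W) = I * z i W := by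
  rw [h, if_pos rfl]

lemma sum_mul_of_notMem (h : IsPhaseFamily p z) {S : Finset ι} {i : ι} (hi : i ∉ S) (W : G) :
    ∑ j ∈ S, z j (p i * W) = ∑ j ∈ S, z j W :=
  Finset.sum_congr rfl fun j hj => by rw [h, if_neg (ne_of_mem_of_not_mem hj hi), one_mul]

lemma norm_mul (h : IsPhaseFamily p z) (i j : ι) (W : G) : ‖z i (p j * W)‖ = ‖z i W‖ := by
  rw [h]
  split_ifs <;> simp

end IsPhaseFamily

lemma apply_pow_mul {G M : Type*} [Group G] [Monoid M] {p : G} {f : G → M} {c : M}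
    (h : ∀ W, f (p * W) = c * f W) (k : ℕ) (W : G) : f (p ^ k * W) = c ^ k * f W := by
  induction k generalizing W with
  | zero => simp
  | succ k ih => rw [pow_succ, mul_assoc, ih, h, pow_succ, mul_assoc]

variable {G : Type*} [Group G] [TopologicalSpace G] [IsTopologicalGroup G] [CompactSpace G]
  [MeasurableSpace G] [BorelSpace G] (μ : Measure G) [IsFiniteMeasure μ] [μ.IsMulLeftInvariant]

lemma integral_sum_pow_mul_left (p : G) (n : ℕ) {f : G → ℝ} (hf : Continuous f) :
    ∫ W, ∑ k ∈ Finset.range n, f (p ^ k * W) ∂μ = n * ∫ W, f W ∂μ := by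
  rw [integral_finsetSum _ fun k _ => integrable_of_continuous μ (by fun_prop)]
  simp only [integral_mul_left_eq_self, Finset.sum_const, Finset.card_range, nsmul_eq_mul]

lemma integral_norm_add_sq_mul {p : G} {x y : G → ℂ} (hx : Continuous x) (hy : Continuous y)
    (hxp : ∀ W, x (p * W) = x W) (hyp : ∀ W, y (p * W) = I * y W) {g : G → ℝ}
    (hg : Continuous g) (hgp : ∀ W, g (p * W) = g W) :
    ∫ W, ‖x W + y W‖ ^ 2 * g W ∂μ = ∫ W, ‖x W‖ ^ 2 * g W ∂μ + ∫ W, ‖y W‖ ^ 2 * g W ∂μ := by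
  have hxk := apply_pow_mul (f := x) (c := 1) (by simpa only [one_mul] using hxp)
  have hgk := apply_pow_mul (f := g) (c := 1) (by simpa only [one_mul] using hgp)
  have h := integral_sum_pow_mul_left μ p 4 (f := fun W => ‖x W + y W‖ ^ 2 * g W) (by fun_prop)
  simp only [hxk, apply_pow_mul hyp, hgk, one_pow, one_mul, ← Finset.sum_mul,
    sum_norm_add_I_pow_mul_sq, mul_assoc, add_mul, integral_const_mul] at h
  rw [integral_add (integrable_of_continuous μ (by fun_prop))
    (integrable_of_continuous μ (by fun_prop))] at h
  push_cast at h
  linarith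

lemma integral_norm_add_pow_four {p : G} {x y : G → ℂ} (hx : Continuous x) (hy : Continuous y)
    (hxp : ∀ W, x (p * W) = x W) (hyp : ∀ W, y (p * W) = I * y W) :
    ∫ W, ‖x W + y W‖ ^ 4 ∂μ
      = ∫ W, ‖x W‖ ^ 4 ∂μ + ∫ W, ‖y W‖ ^ 4 ∂μ + 4 * ∫ W, ‖x W‖ ^ 2 * ‖y W‖ ^ 2 ∂μ := by
  have hxk := apply_pow_mul (f := x) (c := 1) (by simpa only [one_mul] using hxp)
  have h := integral_sum_pow_mul_left μ p 4 (f := fun W => ‖x W + y W‖ ^ 4) (by fun_prop)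
  simp only [hxk, apply_pow_mul hyp, one_pow, one_mul, sum_norm_add_I_pow_mul_pow_four,
    integral_const_mul] at h
  rw [integral_add (integrable_of_continuous μ (by fun_prop))
      (integrable_of_continuous μ (by fun_prop)),
    integral_add (integrable_of_continuous μ (by fun_prop))
      (integrable_of_continuous μ (by fun_prop)), integral_const_mul] at h
  push_cast at h
  linarith

namespace IsPhaseFamily

variable {ι : Type*} [DecidableEq ι] {p : ι → G} {z : ι → G → ℂ}

lemma integral_norm_sum_sq_mul (h : IsPhaseFamily p z) (hz : ∀ i, Continuous (z i)) {g : G → ℝ}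
    (hg : Continuous g) (hgp : ∀ i W, g (p i * W) = g W) (S : Finset ι) :
    ∫ W, ‖∑ i ∈ S, z i W‖ ^ 2 * g W ∂μ = ∑ i ∈ S, ∫ W, ‖z i W‖ ^ 2 * g W ∂μ := by
  induction S using Finset.induction with
  | empty => simp
  | insert i S hi ih =>
    simp only [Finset.sum_insert hi]
    rw [add_comm, ← ih, ← integral_norm_add_sq_mul μ (p := p i) (by fun_prop) (hz i)
      (h.sum_mul_of_notMem hi) (h.apply_mul_self i) hg (hgp i)]
    simp only [add_comm]

lemma integral_norm_sum_pow_four_le (h : IsPhaseFamily p z) (hz : ∀ i, Continuous (z i))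
    {a : ι → ℝ} {C : ℝ} (hdiag : ∀ i, ∫ W, ‖z i W‖ ^ 4 ∂μ ≤ C * a i ^ 2)
    (hoff : ∀ i j, i ≠ j → ∫ W, ‖z i W‖ ^ 2 * ‖z j W‖ ^ 2 ∂μ ≤ C / 2 * (a i * a j))
    (S : Finset ι) :
    ∫ W, ‖∑ i ∈ S, z i W‖ ^ 4 ∂μ ≤ C * (∑ i ∈ S, a i) ^ 2 := by
  induction S using Finset.induction with
  | empty => simp
  | insert i S hi ih =>
    have hcross : ∫ W, ‖∑ j ∈ S, z j W‖ ^ 2 * ‖z i W‖ ^ 2 ∂μ ≤ C / 2 * ((∑ j ∈ S, a j) * a i) := by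
      rw [h.integral_norm_sum_sq_mul μ hz (by fun_prop) (fun j W => by rw [h.norm_mul]),
        Finset.sum_mul, Finset.mul_sum]
      exact Finset.sum_le_sum fun j hj => hoff j i (ne_of_mem_of_not_mem hj hi)
    simp only [Finset.sum_insert hi, add_comm (z i _), add_comm (a i)]
    rw [integral_norm_add_pow_four μ (by fun_prop) (hz i) (h.sum_mul_of_notMem hi)
      (h.apply_mul_self i)]
    linarith [hdiag i]

end IsPhaseFamily

end PhaseAveraging

section UnitaryGroup

variable {ι : Type*} [Fintype ι]

lemma sum_norm_sq_eq_trace (A : Matrix ι ι ℂ) :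
    ((∑ i, ∑ j, ‖A i j‖ ^ 2 : ℝ) : ℂ) = (A * Aᴴ).trace := by
  simp only [trace, diag_apply, mul_apply, conjTranspose_apply]
  push_cast
  exact Finset.sum_congr rfl fun i _ => Finset.sum_congr rfl fun j _ => (Complex.mul_conj' _).symm

variable [DecidableEq ι]

instance compactSpace_unitaryGroup : CompactSpace (unitaryGroup ι ℂ) := by
  have hbox : IsCompact (Set.univ.pi fun _ : ι => Set.univ.pi fun _ : ι =>
      Metric.closedBall (0 : ℂ) 1) :=
    isCompact_univ_pi fun _ => isCompact_univ_pi fun _ => isCompact_closedBall _ _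
  refine isCompact_iff_compactSpace.mp (IsCompact.of_isClosed_subset (X := Matrix ι ι ℂ) hbox ?_ ?_)
  · exact isClosed_unitary
  · intro U hU i _ j _
    simpa only [mem_closedBall_zero_iff] using entry_norm_bound_of_unitary hU i j

instance secondCountableTopology_unitaryGroup : SecondCountableTopology (unitaryGroup ι ℂ) :=
  have : SecondCountableTopology (Matrix ι ι ℂ) :=
    inferInstanceAs (SecondCountableTopology (ι → ι → ℂ))
  TopologicalSpace.Subtype.secondCountableTopology _

instance isMulRightInvariant_of_compactSpace {G : Type*} [Group G] [TopologicalSpace G]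
    [IsTopologicalGroup G] [CompactSpace G] [MeasurableSpace G] [BorelSpace G] (μ : Measure G)
    [μ.IsHaarMeasure] [IsProbabilityMeasure μ] : μ.IsMulRightInvariant where
  map_mul_right_eq_self g := by
    have : IsProbabilityMeasure (μ.map (· * g)) :=
      Measure.isProbabilityMeasure_map (measurable_mul_const g).aemeasurable
    exact Measure.isHaarMeasure_eq_of_isProbabilityMeasure _ _

@[fun_prop]
lemma continuous_unitaryGroup_entry {X : Type*} [TopologicalSpace X] {f : X → unitaryGroup ι ℂ}
    (hf : Continuous f) (i j : ι) : Continuous fun x => (f x).1 i j :=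
  (continuous_subtype_val.comp hf).matrix_elem i j

lemma sum_norm_sq_unitary_mul_mul (U V : unitaryGroup ι ℂ) (A : Matrix ι ι ℂ) :
    ∑ i, ∑ j, ‖(U.1 * A * V.1) i j‖ ^ 2 = ∑ i, ∑ j, ‖A i j‖ ^ 2 := by
  have hU : U.1ᴴ * U.1 = 1 := mem_unitaryGroup_iff'.mp U.2
  have hV : V.1 * V.1ᴴ = 1 := mem_unitaryGroup_iff.mp V.2
  apply Complex.ofReal_injective
  rw [sum_norm_sq_eq_trace, sum_norm_sq_eq_trace, conjTranspose_mul, conjTranspose_mul]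
  calc (U.1 * A * V.1 * (V.1ᴴ * (Aᴴ * U.1ᴴ))).trace
      = (U.1 * (A * (V.1 * V.1ᴴ) * Aᴴ * U.1ᴴ)).trace := by simp only [Matrix.mul_assoc]
    _ = (A * Aᴴ).trace := by
        rw [hV, Matrix.mul_one, trace_mul_comm, Matrix.mul_assoc, hU, Matrix.mul_one]

lemma trace_mul_mul_star_of_mem_unitaryGroup {V : Matrix ι ι ℂ} (hV : V ∈ unitaryGroup ι ℂ)
    (A : Matrix ι ι ℂ) : (V * A * star V).trace = A.trace := by
  rw [trace_mul_comm, ← Matrix.mul_assoc, mem_unitaryGroup_iff'.mp hV, Matrix.one_mul]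

lemma sum_norm_sq_row (W : unitaryGroup ι ℂ) (i : ι) : ∑ j, ‖W.1 i j‖ ^ 2 = 1 := by
  have h : (W.1 * star W.1) i i = 1 := by rw [mem_unitaryGroup_iff.mp W.2, one_apply_eq]
  apply Complex.ofReal_injective
  rw [Complex.ofReal_one, ← h, mul_apply]
  push_cast
  exact Finset.sum_congr rfl fun j _ => (Complex.mul_conj' _).symm

lemma sum_norm_sq_col (W : unitaryGroup ι ℂ) (j : ι) : ∑ i, ‖W.1 i j‖ ^ 2 = 1 := by
  simpa only [Unitary.coe_star, star_apply, norm_star] using sum_norm_sq_row (star W) j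

section SingularValueDecomposition

lemma exists_eq_unitary_mul_diagonal {B : Matrix ι ι ℂ} {e : ι → ℂ} (hB : Bᴴ * B = diagonal e) :
    ∃ (U : unitaryGroup ι ℂ) (s : ι → ℂ), B = U.1 * diagonal s := by
  let v (i : ι) : EuclideanSpace ℂ ι := WithLp.toLp 2 fun k => B k i
  have hinner (i j : ι) : inner ℂ (v i) (v j) = (Bᴴ * B) i j := by
    simp [v, PiLp.inner_apply, mul_apply, mul_comm]
  let u (i : ι) : EuclideanSpace ℂ ι := (‖v i‖ : ℂ)⁻¹ • v i
  have hu : Orthonormal ℂ (({i | v i ≠ 0} : Set ι).domRestrict u) := by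
    constructor
    · rintro ⟨i, hi⟩
      simp [u, norm_smul, norm_ne_zero_iff.mpr hi]
    · rintro ⟨i, _⟩ ⟨j, _⟩ hij
      have hne : i ≠ j := fun h => hij (Subtype.ext h)
      simp [u, inner_smul_left, inner_smul_right, hinner, hB, diagonal_apply_ne _ hne]
  obtain ⟨b, hb⟩ := hu.exists_orthonormalBasis_extension_of_card_eq (by simp)
  let std := EuclideanSpace.basisFun ι ℂ
  refine ⟨⟨std.toBasis.toMatrix b, std.toMatrix_orthonormalBasis_mem_unitary b⟩,
    fun i => ‖v i‖, ?_⟩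
  ext k i
  rw [mul_diagonal]
  change v i k = b i k * _
  by_cases h : v i = 0
  · simp [h]
  · rw [hb i h]
    simp [u, mul_comm _ (v i k), norm_ne_zero_iff.mpr h]

lemma exists_singularValueDecomposition (A : Matrix ι ι ℂ) :
    ∃ (U V : unitaryGroup ι ℂ) (s : ι → ℂ), A = U.1 * diagonal s * V.1 := by
  have hA : (Aᴴ * A).IsHermitian := isHermitian_conjTranspose_mul_self A
  have hdiag : (A * hA.eigenvectorUnitary.1)ᴴ * (A * hA.eigenvectorUnitary.1)
      = diagonal (RCLike.ofReal ∘ hA.eigenvalues) := by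
    rw [← hA.conjStarAlgAut_star_eigenvectorUnitary, Unitary.conjStarAlgAut_apply]
    simp [Matrix.mul_assoc, star_eq_conjTranspose]
  obtain ⟨U, s, hs⟩ := exists_eq_unitary_mul_diagonal hdiag
  refine ⟨U, star hA.eigenvectorUnitary, s, ?_⟩
  rw [← hs, Unitary.coe_star, Matrix.mul_assoc,
    mem_unitaryGroup_iff.mp hA.eigenvectorUnitary.2, Matrix.mul_one]

end SingularValueDecomposition

/-- The diagonal unitary multiplying row `p` by the imaginary unit, the phase used for averaging
over the fourth roots of unity. -/
noncomputable def phaseUnitary (p : ι) : unitaryGroup ι ℂ :=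
  ⟨diagonal fun i => if i = p then Complex.I else 1, by
    rw [mem_unitaryGroup_iff, star_eq_conjTranspose, diagonal_conjTranspose, diagonal_mul_diagonal,
      ← diagonal_one]
    congr 1 with i
    by_cases h : i = p <;> simp [h]⟩

lemma phaseUnitary_mul_apply (p : ι) (W : unitaryGroup ι ℂ) (i j : ι) :
    (phaseUnitary p * W).1 i j = (if i = p then Complex.I else 1) * W.1 i j :=
  diagonal_mul _ _ _ _

/-- The permutation matrix of `τ` as a unitary: left multiplication by it permutes the rows. -/
noncomputable def permUnitary (τ : Equiv.Perm ι) : unitaryGroup ι ℂ :=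
  ⟨τ.permMatrix ℂ, by
    rw [mem_unitaryGroup_iff, star_eq_conjTranspose, conjTranspose_permMatrix, ← permMatrix_mul]
    simp⟩

lemma permUnitary_mul_apply (τ : Equiv.Perm ι) (W : unitaryGroup ι ℂ) (i j : ι) :
    (permUnitary τ * W).1 i j = W.1 (τ i) j := by
  change (τ.permMatrix ℂ * W.1) i j = _
  rw [Equiv.Perm.permMatrix, PEquiv.toMatrix_toPEquiv_mul, submatrix_apply, id_eq]

lemma mul_permUnitary_apply (τ : Equiv.Perm ι) (W : unitaryGroup ι ℂ) (i j : ι) :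
    (W * permUnitary τ).1 i j = W.1 i (τ.symm j) := by
  change (W.1 * τ.permMatrix ℂ) i j = _
  rw [Equiv.Perm.permMatrix, PEquiv.mul_toMatrix_toPEquiv, submatrix_apply, id_eq]

/-- The square root `(1 + I)/2 + (1 - I)/2 • P` of the transposition matrix `P` of `i` and `k`: it
mixes the two rows with equal weights. -/
noncomputable def sqrtSwapUnitary (i k : ι) : unitaryGroup ι ℂ :=
  ⟨((1 + Complex.I) / 2) • (1 : Matrix ι ι ℂ)
      + ((1 - Complex.I) / 2) • (Equiv.swap i k).permMatrix ℂ, by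
    have hP : (Equiv.swap i k).permMatrix ℂ * (Equiv.swap i k).permMatrix ℂ = 1 := by
      rw [← permMatrix_mul, Equiv.swap_mul_self, permMatrix_one]
    have hab : (1 + Complex.I) / 2 * ((1 - Complex.I) / 2) = 1 / 2 := by
      linear_combination -(1 / 4) * Complex.I_sq
    have hbb : (1 - Complex.I) / 2 * ((1 - Complex.I) / 2)
        = -((1 + Complex.I) / 2 * ((1 + Complex.I) / 2)) := by
      linear_combination (1 / 2) * Complex.I_sq
    have ha : star ((1 + Complex.I) / 2) = (1 - Complex.I) / 2 := by simp [sub_eq_add_neg]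
    have hb : star ((1 - Complex.I) / 2) = (1 + Complex.I) / 2 := by simp [sub_eq_add_neg]
    rw [mem_unitaryGroup_iff, star_eq_conjTranspose, conjTranspose_add, conjTranspose_smul,
      conjTranspose_smul, conjTranspose_one, conjTranspose_permMatrix, Equiv.swap_inv, ha, hb]
    simp only [add_mul, mul_add, smul_mul_smul_comm, Matrix.one_mul, Matrix.mul_one, hP, hab, hbb,
      mul_comm ((1 - Complex.I) / 2) ((1 + Complex.I) / 2)]
    module⟩

lemma sqrtSwapUnitary_mul_apply (i k : ι) (W : unitaryGroup ι ℂ) (j : ι) :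
    (sqrtSwapUnitary i k * W).1 i j
      = (1 + Complex.I) / 2 * W.1 i j + (1 - Complex.I) / 2 * W.1 k j := by
  change ((_ • (1 : Matrix ι ι ℂ) + _ • (Equiv.swap i k).permMatrix ℂ) * W.1) i j = _
  rw [add_mul, smul_mul, smul_mul, Matrix.one_mul, Equiv.Perm.permMatrix,
    PEquiv.toMatrix_toPEquiv_mul]
  simp

end UnitaryGroup

section HaarEntryMoments

variable {ι : Type*} [Fintype ι]

lemma sum_eq_add_card_sub_one_mul {f : ι → ℝ} {i : ι} {b : ℝ}
    (h : ∀ k, k ≠ i → f k = b) : ∑ k, f k = f i + (Fintype.card ι - 1) * b := by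
  classical
  rw [← Finset.add_sum_erase _ _ (Finset.mem_univ i),
    Finset.sum_congr rfl fun k hk => h k (Finset.ne_of_mem_erase hk), Finset.sum_const,
    Finset.card_erase_of_mem (Finset.mem_univ i), Finset.card_univ, nsmul_eq_mul,
    Nat.cast_pred (Fintype.card_pos_iff.mpr ⟨i⟩)]

variable [DecidableEq ι] [MeasurableSpace (unitaryGroup ι ℂ)] (μ : Measure (unitaryGroup ι ℂ))

/-- The mixed second moment `E[|W i j|² |W k l|²]` of two entries of a random unitary. -/
noncomputable def entryMoment (i j k l : ι) : ℝ := ∫ W, ‖W.1 i j‖ ^ 2 * ‖W.1 k l‖ ^ 2 ∂μ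

lemma entryMoment_self (i j : ι) : entryMoment μ i j i j = ∫ W, ‖W.1 i j‖ ^ 4 ∂μ := by
  simp only [entryMoment, ← pow_add, Nat.reduceAdd]

variable [BorelSpace (unitaryGroup ι ℂ)] [μ.IsHaarMeasure]

lemma entryMoment_perm_left (τ : Equiv.Perm ι) (i j k l : ι) :
    entryMoment μ (τ i) j (τ k) l = entryMoment μ i j k l := by
  unfold entryMoment
  rw [← integral_mul_left_eq_self (fun W => ‖W.1 i j‖ ^ 2 * ‖W.1 k l‖ ^ 2) (permUnitary τ)]
  simp only [permUnitary_mul_apply]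

variable [IsProbabilityMeasure μ]

lemma entryMoment_perm_right (τ : Equiv.Perm ι) (i j k l : ι) :
    entryMoment μ i (τ j) k (τ l) = entryMoment μ i j k l := by
  unfold entryMoment
  rw [← integral_mul_right_eq_self (fun W => ‖W.1 i j‖ ^ 2 * ‖W.1 k l‖ ^ 2) (permUnitary τ.symm)]
  simp only [mul_permUnitary_apply, Equiv.symm_symm]

lemma integral_norm_sq_entry (i j : ι) :
    ∫ W, ‖W.1 i j‖ ^ 2 ∂μ = 1 / (Fintype.card ι : ℝ) := by
  have hrow (k : ι) : ∫ W, ‖W.1 k j‖ ^ 2 ∂μ = ∫ W, ‖W.1 i j‖ ^ 2 ∂μ := by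
    rw [← integral_mul_left_eq_self (fun W => ‖W.1 i j‖ ^ 2) (permUnitary (Equiv.swap i k))]
    simp only [permUnitary_mul_apply, Equiv.swap_apply_left]
  have hsum : ∑ k, ∫ W, ‖W.1 k j‖ ^ 2 ∂μ = 1 := by
    rw [← integral_finsetSum _ fun k _ => integrable_of_continuous μ (by fun_prop)]
    simp only [sum_norm_sq_col, integral_const, probReal_univ, one_smul]
  simp only [hrow, Finset.sum_const, Finset.card_univ, nsmul_eq_mul] at hsum
  exact eq_one_div_of_mul_eq_one_right hsum

lemma sum_entryMoment_col (i j l : ι) :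
    ∑ k, entryMoment μ i j k l = 1 / (Fintype.card ι : ℝ) := by
  unfold entryMoment
  rw [← integral_finsetSum _ fun k _ => integrable_of_continuous μ (by fun_prop),
    ← integral_norm_sq_entry μ i j]
  simp only [← Finset.mul_sum, sum_norm_sq_col, mul_one]

lemma sum_entryMoment_row (i j k : ι) :
    ∑ l, entryMoment μ i j k l = 1 / (Fintype.card ι : ℝ) := by
  unfold entryMoment
  rw [← integral_finsetSum _ fun k _ => integrable_of_continuous μ (by fun_prop),
    ← integral_norm_sq_entry μ i j]
  simp only [← Finset.mul_sum, sum_norm_sq_row, mul_one]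

-- Mixing rows `i` and `k` by `sqrtSwapUnitary` does not change the law of `W i j`; expanding the
-- fourth power of the mixture relates the two moments.
lemma entryMoment_same_col {i k : ι} (hik : i ≠ k) (j : ι) :
    entryMoment μ i j k j = entryMoment μ i j i j / 2 := by
  have hk : ∫ W, ‖W.1 k j‖ ^ 4 ∂μ = ∫ W, ‖W.1 i j‖ ^ 4 ∂μ := by
    simpa only [entryMoment_self, Equiv.swap_apply_left]
      using entryMoment_perm_left μ (Equiv.swap i k) i j i j
  have ha : ‖(1 + Complex.I) / 2‖ ^ 2 = 1 / 2 := by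
    rw [Complex.sq_norm, Complex.normSq_apply]
    norm_num
  have hb : ‖(1 - Complex.I) / 2‖ ^ 2 = 1 / 2 := by
    rw [Complex.sq_norm, Complex.normSq_apply]
    norm_num
  have hpow (z : ℂ) : ‖z‖ ^ 4 = (‖z‖ ^ 2) ^ 2 := pow_mul ‖z‖ 2 2
  have hmix := integral_norm_add_pow_four μ (p := phaseUnitary k)
    (x := fun W => (1 + Complex.I) / 2 * W.1 i j) (y := fun W => (1 - Complex.I) / 2 * W.1 k j)
    (by fun_prop) (by fun_prop) (fun W => by simp [phaseUnitary_mul_apply, hik])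
    (fun W => by simp [phaseUnitary_mul_apply, mul_left_comm])
  simp only [← sqrtSwapUnitary_mul_apply] at hmix
  rw [integral_mul_left_eq_self (fun W : unitaryGroup ι ℂ => ‖W.1 i j‖ ^ 4)
    (sqrtSwapUnitary i k)] at hmix
  simp only [norm_mul, mul_pow, hpow, ha, hb, mul_mul_mul_comm (1 / 2 : ℝ) _ (1 / 2)] at hmix
  simp only [← hpow, integral_const_mul, hk] at hmix
  rw [entryMoment_self]
  unfold entryMoment
  linarith

lemma integral_norm_pow_four_entry (i j : ι) :
    ∫ W, ‖W.1 i j‖ ^ 4 ∂μ = 2 / ((Fintype.card ι : ℝ) * (Fintype.card ι + 1)) := by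
  have hcard : (0 : ℝ) < Fintype.card ι := by exact_mod_cast Fintype.card_pos_iff.mpr ⟨i⟩
  have hsum := sum_entryMoment_col μ i j j
  rw [sum_eq_add_card_sub_one_mul fun k hk => entryMoment_same_col μ hk.symm j,
    entryMoment_self] at hsum
  field_simp at hsum ⊢
  linarith

lemma entryMoment_diag {i k : ι} (hik : i ≠ k) :
    entryMoment μ i i k k = 1 / ((Fintype.card ι : ℝ) ^ 2 - 1) := by
  have hcard : (1 : ℝ) < Fintype.card ι := by
    exact_mod_cast Fintype.one_lt_card_iff.mpr ⟨i, k, hik⟩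
  have hperm (l : ι) (hl : l ≠ i) : entryMoment μ i i k l = entryMoment μ i i k k := by
    simpa only [Equiv.swap_apply_left, Equiv.swap_apply_of_ne_of_ne hik hl.symm]
      using entryMoment_perm_right μ (Equiv.swap k l) i i k k
  have hsum := sum_entryMoment_row μ i i k
  rw [sum_eq_add_card_sub_one_mul hperm, entryMoment_same_col μ hik, entryMoment_self,
    integral_norm_pow_four_entry] at hsum
  have hd : (Fintype.card ι : ℝ) - 1 ≠ 0 := by linarith
  rw [show (Fintype.card ι : ℝ) ^ 2 - 1 = (Fintype.card ι - 1) * (Fintype.card ι + 1) by ring]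
  field_simp at hsum ⊢
  refine mul_left_cancel₀ (zero_lt_one.trans hcard).ne' ?_
  linarith

end HaarEntryMoments

section BilinearFormMoments

/-- The squared Hilbert–Schmidt norm of a finite family of matrices, in terms of which the moments
of `normSqForm A` are expressed. -/
noncomputable def hsSq {P ι : Type*} [Fintype P] [Fintype ι] (A : P → Matrix ι ι ℂ) : ℝ :=
  ∑ p, ∑ i, ∑ j, ‖A p i j‖ ^ 2

/-- The squared length of the vector of bilinear pairings of `W` with the members of a finite
family of matrices; the fidelity kernel is of this form as a function of the circuit. -/
noncomputable def normSqForm {P ι : Type*} [Fintype P] [Fintype ι] (A : P → Matrix ι ι ℂ)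
    (W : Matrix ι ι ℂ) : ℝ :=
  ∑ p, ‖∑ i, ∑ j, W i j * A p i j‖ ^ 2

variable {ι : Type*} [Fintype ι] [DecidableEq ι]

lemma isPhaseFamily_diagonal (s : ι → ℂ) :
    IsPhaseFamily (phaseUnitary (ι := ι)) fun i W => s i * W.1 i i := fun i j W => by
  simp only [phaseUnitary_mul_apply, mul_left_comm]

variable [MeasurableSpace (unitaryGroup ι ℂ)] [BorelSpace (unitaryGroup ι ℂ)]
  (μ : Measure (unitaryGroup ι ℂ)) [μ.IsHaarMeasure] [IsProbabilityMeasure μ]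

lemma integral_norm_sum_diagonal_sq (s : ι → ℂ) :
    ∫ W, ‖∑ i, s i * W.1 i i‖ ^ 2 ∂μ = (∑ i, ‖s i‖ ^ 2) / Fintype.card ι := by
  have h := (isPhaseFamily_diagonal s).integral_norm_sum_sq_mul μ (by fun_prop) (g := 1)
    continuous_const (fun _ _ => rfl) Finset.univ
  simp only [Pi.one_apply, mul_one, norm_mul, mul_pow, integral_const_mul,
    integral_norm_sq_entry] at h
  rw [h, ← Finset.sum_mul, mul_one_div]

lemma integral_norm_sum_diagonal_pow_four_le [Nontrivial ι] (s : ι → ℂ) :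
    ∫ W, ‖∑ i, s i * W.1 i i‖ ^ 4 ∂μ
      ≤ 2 / ((Fintype.card ι : ℝ) ^ 2 - 1) * (∑ i, ‖s i‖ ^ 2) ^ 2 := by
  have hcard : (1 : ℝ) < Fintype.card ι := by exact_mod_cast Fintype.one_lt_card
  refine (isPhaseFamily_diagonal s).integral_norm_sum_pow_four_le μ (by fun_prop)
    (fun i => ?_) (fun i j hij => ?_) Finset.univ
  · simp only [norm_mul, mul_pow, integral_const_mul, integral_norm_pow_four_entry]
    rw [mul_comm, ← pow_mul]
    gcongr
    · nlinarith
    · nlinarith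
  · simp only [norm_mul, mul_pow, mul_mul_mul_comm (‖s i‖ ^ 2), integral_const_mul]
    rw [← entryMoment, entryMoment_diag μ hij]
    apply le_of_eq
    ring

lemma exists_integral_bilinear_eq_diagonal (A : Matrix ι ι ℂ) :
    ∃ s : ι → ℂ, ∑ i, ∑ j, ‖A i j‖ ^ 2 = ∑ i, ‖s i‖ ^ 2 ∧ ∀ F : ℂ → ℝ,
      ∫ W, F (∑ i, ∑ j, W.1 i j * A i j) ∂μ = ∫ W, F (∑ i, s i * W.1 i i) ∂μ := by
  obtain ⟨U, V, s, hA⟩ := exists_singularValueDecomposition Aᵀ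
  refine ⟨s, ?_, fun F => ?_⟩
  · have hdiag (i : ι) : ∑ j, ‖diagonal s i j‖ ^ 2 = ‖s i‖ ^ 2 := by
      rw [Finset.sum_eq_single i (fun j _ hj => by simp [diagonal_apply_ne' _ hj]) (by simp),
        diagonal_apply_eq]
    rw [Finset.sum_comm]
    calc ∑ i, ∑ j, ‖Aᵀ i j‖ ^ 2 = ∑ i, ∑ j, ‖diagonal s i j‖ ^ 2 := by
          rw [hA, sum_norm_sq_unitary_mul_mul]
      _ = ∑ i, ‖s i‖ ^ 2 := Finset.sum_congr rfl fun i _ => hdiag i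
  · have htrace (W : unitaryGroup ι ℂ) :
        ∑ i, ∑ j, W.1 i j * A i j = ∑ i, s i * (V * (W * U)).1 i i :=
      calc ∑ i, ∑ j, W.1 i j * A i j = (W.1 * Aᵀ).trace := by
            simp only [trace, diag_apply, mul_apply, transpose_apply]
        _ = (W.1 * U.1 * diagonal s * V.1).trace := by rw [hA]; simp only [Matrix.mul_assoc]
        _ = (diagonal s * (V.1 * (W.1 * U.1))).trace := by
            rw [trace_mul_comm, ← Matrix.mul_assoc, trace_mul_comm]
        _ = ∑ i, s i * (V * (W * U)).1 i i := by
            simp only [trace, diag_apply, diagonal_mul, Submonoid.coe_mul]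
    simp only [htrace]
    rw [integral_mul_right_eq_self (fun W : unitaryGroup ι ℂ => F (∑ i, s i * (V * W).1 i i)) U,
      integral_mul_left_eq_self (fun W : unitaryGroup ι ℂ => F (∑ i, s i * W.1 i i)) V]

variable {P : Type*} [Fintype P]

lemma integral_normSqForm (A : P → Matrix ι ι ℂ) :
    ∫ W, normSqForm A W.1 ∂μ = hsSq A / Fintype.card ι := by
  unfold normSqForm hsSq
  rw [integral_finsetSum _ fun p _ => integrable_of_continuous μ (by fun_prop), Finset.sum_div]
  refine Finset.sum_congr rfl fun p _ => ?_
  obtain ⟨s, hs, hint⟩ := exists_integral_bilinear_eq_diagonal μ (A p)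
  rw [hint fun z => ‖z‖ ^ 2, integral_norm_sum_diagonal_sq, hs]

lemma integral_normSqForm_sq_le [Nontrivial ι] (A : P → Matrix ι ι ℂ) :
    ∫ W, normSqForm A W.1 ^ 2 ∂μ ≤ 2 / ((Fintype.card ι : ℝ) ^ 2 - 1) * hsSq A ^ 2 := by
  have hcard : (1 : ℝ) < Fintype.card ι := by exact_mod_cast Fintype.one_lt_card
  refine integral_sum_sq_le (fun p => ?_) (fun p => by positivity)
    (div_nonneg zero_le_two (by nlinarith)) fun p => ?_
  · refine Continuous.memLp_of_hasCompactSupport ?_ (HasCompactSupport.of_compactSpace _)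
    fun_prop
  · obtain ⟨s, hs, hint⟩ := exists_integral_bilinear_eq_diagonal μ (A p)
    simp only [← pow_mul, Nat.reduceMul]
    rw [hint fun z => ‖z‖ ^ 4, hs]
    exact integral_norm_sum_diagonal_pow_four_le μ s

end BilinearFormMoments

section PiKronecker

variable {κ α R : Type*} [Fintype κ]

/-- The tensor product of a family of square matrices, as a matrix indexed by tuples. -/
def piKronecker [DecidableEq κ] [Fintype α] [DecidableEq α] [CommSemiring R] :
    (κ → Matrix α α R) →* Matrix (κ → α) (κ → α) R where
  toFun g := of fun x y => ∏ k, g k (x k) (y k)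
  map_one' := by
    ext x y
    simp only [of_apply, Pi.one_apply, one_apply, Fintype.prod_boole, funext_iff]
  map_mul' g h := by
    ext x y
    simp only [of_apply, Pi.mul_apply, mul_apply, Finset.prod_univ_sum, Fintype.piFinset_univ,
      Finset.prod_mul_distrib]

variable [DecidableEq κ] [Fintype α] [DecidableEq α]

lemma piKronecker_apply [CommSemiring R] (g : κ → Matrix α α R) (x y : κ → α) :
    piKronecker g x y = ∏ k, g k (x k) (y k) := rfl

lemma star_piKronecker [CommSemiring R] [StarRing R] (g : κ → Matrix α α R) :
    star (piKronecker g) = piKronecker (star g) := by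
  ext x y
  simp only [star_apply, piKronecker_apply, star_prod, Pi.star_apply]

lemma piKronecker_mem_unitaryGroup [CommRing R] [StarRing R] (g : κ → unitaryGroup α R) :
    piKronecker (fun k => (g k).1) ∈ unitaryGroup (κ → α) R := by
  rw [mem_unitaryGroup_iff, star_piKronecker, ← map_mul, ← map_one piKronecker]
  exact congrArg _ (funext fun k => mem_unitaryGroup_iff.mp (g k).2)

lemma piKronecker_cons_apply [CommRing R] [StarRing R] {n : ℕ} (w : unitaryGroup α R)
    (ws : Fin n → unitaryGroup α R) (i j : α) (x y : Fin n → α) :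
    piKronecker (fun k => ((Fin.cons w ws : Fin (n + 1) → unitaryGroup α R) k).1)
      (Fin.cons i x : Fin (n + 1) → α) (Fin.cons j y : Fin (n + 1) → α) =
        w.1 i j * piKronecker (fun k => (ws k).1) x y := by
  simp only [piKronecker_apply, Fin.prod_univ_succ, Fin.cons_zero, Fin.cons_succ]

lemma continuous_piKronecker :
    Continuous (piKronecker : (κ → Matrix α α ℂ) → Matrix (κ → α) (κ → α) ℂ) :=
  continuous_matrix fun x y => by
    simp only [piKronecker_apply]
    fun_prop

end PiKronecker

section PiMeasure

lemma integral_pi_succ {X : Type*} [TopologicalSpace X] [CompactSpace X]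
    [SecondCountableTopology X] [MeasurableSpace X] [BorelSpace X] (ν : Measure X)
    [IsFiniteMeasure ν] {n : ℕ} {F : (Fin (n + 1) → X) → ℝ} (hF : Continuous F) :
    ∫ x, F x ∂Measure.pi (fun _ => ν) =
      ∫ x : Fin n → X, ∫ x₀, F (Fin.cons x₀ x) ∂ν ∂Measure.pi fun _ => ν := by
  have hint : Integrable (fun p : X × (Fin n → X) => F (Fin.cons p.1 p.2))
      (ν.prod (Measure.pi fun _ => ν)) := integrable_of_continuous _ (by fun_prop)
  rw [← integral_prod_symm _ hint,
    ← (measurePreserving_piFinSuccAbove (fun _ : Fin (n + 1) => ν) 0).symm.integral_comp']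
  simp only [MeasurableEquiv.piFinSuccAbove_symm_apply, Fin.insertNthEquiv_zero]
  rfl

end PiMeasure

section TensorProductMoments

universe u

lemma sum_fin_cons {α M : Type*} [Fintype α] [AddCommMonoid M] {n : ℕ}
    (f : (Fin (n + 1) → α) → M) : ∑ x, f x = ∑ i, ∑ x : Fin n → α, f (Fin.cons i x) := by
  rw [← (Fin.consEquiv fun _ => α).sum_comp f, Fintype.sum_prod_type]
  rfl

-- `headSlice` replaces `P` by `P × α × α`, so inductions on `n` need `P` in the universe of `α`.
variable {α P : Type u} {n : ℕ}

/-- The family of matrices obtained from `A` by fixing the first row and column indices. -/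
def headSlice (A : P → Matrix (Fin (n + 1) → α) (Fin (n + 1) → α) ℂ) (q : P × α × α) :
    Matrix (Fin n → α) (Fin n → α) ℂ :=
  of fun x y => A q.1 (Fin.cons q.2.1 x) (Fin.cons q.2.2 y)

/-- The family of matrices obtained from `A` by pairing all but the first tensor factor with
`T`. -/
noncomputable def contractTail [Fintype α]
    (A : P → Matrix (Fin (n + 1) → α) (Fin (n + 1) → α) ℂ)
    (T : Matrix (Fin n → α) (Fin n → α) ℂ) (p : P) : Matrix α α ℂ :=
  of fun i j => ∑ x, ∑ y, T x y * headSlice A (p, i, j) x y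

variable [Fintype α] [Fintype P]

lemma hsSq_headSlice (A : P → Matrix (Fin (n + 1) → α) (Fin (n + 1) → α) ℂ) :
    hsSq (headSlice A) = hsSq A := by
  simp only [hsSq, headSlice, of_apply, Fintype.sum_prod_type, sum_fin_cons]
  refine Finset.sum_congr rfl fun p _ => Finset.sum_congr rfl fun i _ => Finset.sum_comm

lemma hsSq_contractTail (A : P → Matrix (Fin (n + 1) → α) (Fin (n + 1) → α) ℂ)
    (T : Matrix (Fin n → α) (Fin n → α) ℂ) :
    hsSq (contractTail A T) = normSqForm (headSlice A) T := by
  simp only [hsSq, normSqForm, contractTail, of_apply, Fintype.sum_prod_type]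

variable [DecidableEq α]

lemma normSqForm_piKronecker_cons (A : P → Matrix (Fin (n + 1) → α) (Fin (n + 1) → α) ℂ)
    (w : unitaryGroup α ℂ) (ws : Fin n → unitaryGroup α ℂ) :
    normSqForm A (piKronecker fun k => ((Fin.cons w ws : Fin (n + 1) → unitaryGroup α ℂ) k).1) =
      normSqForm (contractTail A (piKronecker fun k => (ws k).1)) w.1 := by
  simp only [normSqForm, contractTail, headSlice, of_apply, sum_fin_cons,
    piKronecker_cons_apply, Finset.mul_sum, mul_assoc]
  refine Finset.sum_congr rfl fun p _ => ?_
  congr 2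
  exact Finset.sum_congr rfl fun i _ => Finset.sum_comm

lemma normSqForm_piKronecker_zero (A : P → Matrix (Fin 0 → α) (Fin 0 → α) ℂ)
    (ws : Fin 0 → Matrix α α ℂ) : normSqForm A (piKronecker ws) = hsSq A := by
  simp only [normSqForm, hsSq, Fintype.sum_unique, piKronecker_apply, Fin.prod_univ_zero, one_mul]

lemma continuous_normSqForm {ι : Type*} [Fintype ι] (A : P → Matrix ι ι ℂ) :
    Continuous (normSqForm A) := by
  unfold normSqForm
  fun_prop

variable [MeasurableSpace (unitaryGroup α ℂ)] [BorelSpace (unitaryGroup α ℂ)]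
  (μ : Measure (unitaryGroup α ℂ)) [IsProbabilityMeasure μ]

lemma integral_normSqForm_piKronecker_succ
    (A : P → Matrix (Fin (n + 1) → α) (Fin (n + 1) → α) ℂ) (r : ℕ) :
    ∫ W, normSqForm A (piKronecker fun k => (W k).1) ^ r ∂Measure.pi (fun _ => μ) =
      ∫ ws : Fin n → unitaryGroup α ℂ,
        ∫ w, normSqForm (contractTail A (piKronecker fun k => (ws k).1)) w.1 ^ r ∂μ
          ∂Measure.pi fun _ => μ := by
  have hcont : Continuous fun W : Fin (n + 1) → unitaryGroup α ℂ =>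
      normSqForm A (piKronecker fun k => (W k).1) ^ r :=
    ((continuous_normSqForm A).comp (continuous_piKronecker.comp (by fun_prop))).pow r
  simp only [integral_pi_succ μ hcont, normSqForm_piKronecker_cons]

variable [μ.IsHaarMeasure]

lemma integral_normSqForm_piKronecker (A : P → Matrix (Fin n → α) (Fin n → α) ℂ) :
    ∫ W, normSqForm A (piKronecker fun k => (W k).1) ∂Measure.pi (fun _ => μ) =
      hsSq A / (Fintype.card α : ℝ) ^ n := by
  induction n generalizing P with
  | zero =>
    simp only [normSqForm_piKronecker_zero, integral_const, probReal_univ, one_smul, pow_zero,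
      div_one]
  | succ n ih =>
    have hsucc := integral_normSqForm_piKronecker_succ μ A 1
    simp only [pow_one] at hsucc
    rw [hsucc]
    simp only [integral_normSqForm, hsSq_contractTail]
    rw [integral_div, ih, hsSq_headSlice, div_div, pow_succ]

lemma integral_normSqForm_piKronecker_sq_le [Nontrivial α]
    (A : P → Matrix (Fin n → α) (Fin n → α) ℂ) :
    ∫ W, normSqForm A (piKronecker fun k => (W k).1) ^ 2 ∂Measure.pi (fun _ => μ) ≤
      (2 / ((Fintype.card α : ℝ) ^ 2 - 1)) ^ n * hsSq A ^ 2 := by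
  have hcard : (1 : ℝ) < Fintype.card α := by exact_mod_cast Fintype.one_lt_card
  have hc : 0 ≤ 2 / ((Fintype.card α : ℝ) ^ 2 - 1) := div_nonneg zero_le_two (by nlinarith)
  induction n generalizing P with
  | zero =>
    simp only [normSqForm_piKronecker_zero, integral_const, probReal_univ, one_smul, pow_zero,
      one_mul, le_refl]
  | succ n ih =>
    let tail (ws : Fin n → unitaryGroup α ℂ) := piKronecker fun k => (ws k).1
    have hcont : Continuous fun ws => normSqForm (headSlice A) (tail ws) ^ 2 :=
      ((continuous_normSqForm _).comp (continuous_piKronecker.comp (by fun_prop))).pow 2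
    have hhead (ws : Fin n → unitaryGroup α ℂ) :
        ∫ w, normSqForm (contractTail A (tail ws)) w.1 ^ 2 ∂μ ≤
          2 / ((Fintype.card α : ℝ) ^ 2 - 1) * normSqForm (headSlice A) (tail ws) ^ 2 := by
      simpa only [hsSq_contractTail] using integral_normSqForm_sq_le μ (contractTail A (tail ws))
    calc ∫ W, normSqForm A (piKronecker fun k => (W k).1) ^ 2 ∂Measure.pi (fun _ => μ)
        = ∫ ws, ∫ w, normSqForm (contractTail A (tail ws)) w.1 ^ 2 ∂μ
            ∂Measure.pi (fun _ => μ) := integral_normSqForm_piKronecker_succ μ A 2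
      _ ≤ ∫ ws, 2 / ((Fintype.card α : ℝ) ^ 2 - 1) * normSqForm (headSlice A) (tail ws) ^ 2
            ∂Measure.pi (fun _ => μ) :=
          integral_mono_of_nonneg (ae_of_all _ fun ws => integral_nonneg fun w => sq_nonneg _)
            (integrable_of_continuous _ (continuous_const.mul hcont)) (ae_of_all _ hhead)
      _ ≤ 2 / ((Fintype.card α : ℝ) ^ 2 - 1) *
            ((2 / ((Fintype.card α : ℝ) ^ 2 - 1)) ^ n * hsSq (headSlice A) ^ 2) := by
          rw [integral_const_mul]
          exact mul_le_mul_of_nonneg_left (ih _) hc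
      _ = (2 / ((Fintype.card α : ℝ) ^ 2 - 1)) ^ (n + 1) * hsSq A ^ 2 := by
          rw [hsSq_headSlice, pow_succ' (2 / _), mul_assoc]

end TensorProductMoments

section FidelityKernel

variable {ι : Type*} [Fintype ι]

lemma trace_submatrix_equiv {ι' R : Type*} [Fintype ι'] [AddCommMonoid R] (e : ι' ≃ ι)
    (A : Matrix ι ι R) : (A.submatrix e e).trace = A.trace :=
  e.sum_comp fun i => A i i

/-- The fidelity kernel `Tr[U ρ U† σ]` of a circuit `U` as a real number; for positive
semidefinite `ρ` and `σ` the trace is real. -/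
noncomputable def fidelityKernel (U ρ σ : Matrix ι ι ℂ) : ℝ := (U * ρ * star U * σ).trace.re

lemma fidelityKernel_mul (G V ρ σ : Matrix ι ι ℂ) :
    fidelityKernel (G * V) ρ σ = fidelityKernel G (V * ρ * star V) σ := by
  simp only [fidelityKernel, star_mul, Matrix.mul_assoc]

lemma fidelityKernel_submatrix {ι' : Type*} [Fintype ι'] (e : ι' ≃ ι) (U : Matrix ι ι ℂ)
    (ρ σ : Matrix ι' ι' ℂ) :
    fidelityKernel (U.submatrix e e) ρ σ =
      fidelityKernel U (ρ.submatrix e.symm e.symm) (σ.submatrix e.symm e.symm) := by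
  obtain ⟨ρ, rfl⟩ := (reindex e.symm e.symm).surjective ρ
  obtain ⟨σ, rfl⟩ := (reindex e.symm e.symm).surjective σ
  simp only [fidelityKernel, reindex_apply, Equiv.symm_symm, submatrix_submatrix,
    Equiv.self_comp_symm, submatrix_id_id, star_eq_conjTranspose, conjTranspose_submatrix,
    submatrix_mul_equiv, trace_submatrix_equiv]

lemma continuous_fidelityKernel (ρ σ : Matrix ι ι ℂ) :
    Continuous fun U => fidelityKernel U ρ σ :=
  Complex.continuous_re.comp ((((continuous_id.matrix_mul continuous_const).matrix_mul
    continuous_star).matrix_mul continuous_const).matrix_trace)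

-- With `ρ = bᴴ b` and `σ = cᴴ c` the kernel is the squared Hilbert–Schmidt norm of `c U bᴴ`.
open scoped MatrixOrder in
lemma exists_fidelityKernel_eq_normSqForm {ρ σ : Matrix ι ι ℂ} (hρ : ρ.PosSemidef)
    (hσ : σ.PosSemidef) :
    ∃ A : ι × ι → Matrix ι ι ℂ, hsSq A = ρ.trace.re * σ.trace.re ∧
      ∀ U, fidelityKernel U ρ σ = normSqForm A U := by
  classical
  obtain ⟨b, hb⟩ := CStarAlgebra.nonneg_iff_eq_star_mul_self.mp hρ.nonneg
  obtain ⟨c, hc⟩ := CStarAlgebra.nonneg_iff_eq_star_mul_self.mp hσ.nonneg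
  rw [star_eq_conjTranspose] at hb hc
  subst hb hc
  refine ⟨fun p => of fun i j => c p.1 i * star (b p.2 j), ?_, fun U => ?_⟩
  · rw [trace_mul_comm bᴴ, trace_mul_comm cᴴ, ← sum_norm_sq_eq_trace, ← sum_norm_sq_eq_trace]
    simp only [hsSq, of_apply, norm_mul, norm_star, mul_pow, Fintype.sum_prod_type,
      ← Finset.mul_sum, ← Finset.sum_mul, Complex.ofReal_re]
    rw [mul_comm]
  · have htrace : (U * (bᴴ * b) * star U * (cᴴ * c)).trace
        = ((c * U * bᴴ) * (c * U * bᴴ)ᴴ).trace := by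
      rw [← Matrix.mul_assoc, trace_mul_comm]
      simp only [conjTranspose_mul, conjTranspose_conjTranspose, star_eq_conjTranspose,
        Matrix.mul_assoc]
    have hentry (p q : ι) :
        (c * U * bᴴ) p q = ∑ i, ∑ j, U i j * (c p i * star (b q j)) := by
      simp only [mul_apply, conjTranspose_apply, Finset.sum_mul]
      rw [Finset.sum_comm]
      refine Finset.sum_congr rfl fun i _ => Finset.sum_congr rfl fun j _ => by ring
    rw [fidelityKernel, htrace, ← sum_norm_sq_eq_trace, Complex.ofReal_re]
    simp only [hentry, normSqForm, of_apply, Fintype.sum_prod_type]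

variable {α : Type*} [Fintype α] [DecidableEq α] [MeasurableSpace (unitaryGroup α ℂ)]
  [BorelSpace (unitaryGroup α ℂ)] (μ : Measure (unitaryGroup α ℂ)) [IsProbabilityMeasure μ]
  [μ.IsHaarMeasure] {n : ℕ} {ρ σ : Matrix (Fin n → α) (Fin n → α) ℂ}

lemma integral_fidelityKernel_piKronecker (hρ : ρ.PosSemidef) (hσ : σ.PosSemidef) :
    ∫ W, fidelityKernel (piKronecker fun k => (W k).1) ρ σ ∂Measure.pi (fun _ => μ) =
      ρ.trace.re * σ.trace.re / (Fintype.card α : ℝ) ^ n := by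
  obtain ⟨A, hA, hker⟩ := exists_fidelityKernel_eq_normSqForm hρ hσ
  simp only [hker, integral_normSqForm_piKronecker, hA]

lemma integral_fidelityKernel_piKronecker_sq_le [Nontrivial α] (hρ : ρ.PosSemidef)
    (hσ : σ.PosSemidef) :
    ∫ W, fidelityKernel (piKronecker fun k => (W k).1) ρ σ ^ 2 ∂Measure.pi (fun _ => μ) ≤
      (2 / ((Fintype.card α : ℝ) ^ 2 - 1)) ^ n * (ρ.trace.re * σ.trace.re) ^ 2 := by
  obtain ⟨A, hA, hker⟩ := exists_fidelityKernel_eq_normSqForm hρ hσ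
  simpa only [hker, hA] using integral_normSqForm_piKronecker_sq_le μ A

end FidelityKernel

section Circuit

variable {m κ : ℕ}

lemma blockPos_bijective (h : 0 < m * κ) (d : ℕ) :
    Function.Bijective fun p : Fin κ × Fin m => blockPos m κ h d p.1 p.2 := by
  refine (Fintype.bijective_iff_injective_and_card _).mpr
    ⟨fun p q hpq => finProdFinEquiv.injective (Fin.ext ?_), by simp [mul_comm]⟩
  have hval (r : Fin κ × Fin m) :
      (blockPos m κ h d r.1 r.2).val = (r.2 + m * r.1 + d % 2 * (m / 2)) % (m * κ) := by
    simp only [blockPos, mul_comm m, add_right_comm, add_comm (r.2 : ℕ)]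
  have hmod : p.2 + m * p.1 + d % 2 * (m / 2) ≡ q.2 + m * q.1 + d % 2 * (m / 2) [MOD m * κ] :=
    (hval p).symm.trans ((congrArg Fin.val hpq).trans (hval q))
  exact (Nat.ModEq.add_right_cancel' _ hmod).eq_of_lt_of_lt
    ((finProdFinEquiv p).2.trans_eq (mul_comm κ m)) ((finProdFinEquiv q).2.trans_eq (mul_comm κ m))

lemma blockPos_mem_range_iff (h : 0 < m * κ) (d : ℕ) {k l : Fin κ} (t : Fin m) :
    blockPos m κ h d l t ∈ Set.range (blockPos m κ h d k) ↔ l = k := by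
  refine ⟨fun ⟨s, hs⟩ => ?_, fun hlk => ⟨t, by rw [hlk]⟩⟩
  have hpair : (k, s) = (l, t) := (blockPos_bijective h d).injective hs
  exact (congrArg Prod.fst hpair).symm

/-- Splitting a bit string on all qubits into the bit strings on the blocks of layer `d`. -/
noncomputable def blockBits (h : 0 < m * κ) (d : ℕ) :
    (Fin (m * κ) → Bool) ≃ (Fin κ → Fin m → Bool) :=
  ((Equiv.ofBijective _ (blockPos_bijective h d)).symm.arrowCongr (Equiv.refl Bool)).trans
    (Equiv.curry _ _ _)

lemma blockBits_apply (h : 0 < m * κ) (d : ℕ) (x : Fin (m * κ) → Bool) (k : Fin κ) :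
    blockBits h d x k = x ∘ blockPos m κ h d k := rfl

/-- Layer `d` of the alternating layered ansatz as a function of its blocks. -/
noncomputable def layer (h : 0 < m * κ) (d : ℕ) :
    (Fin κ → Matrix (Fin m → Bool) (Fin m → Bool) ℂ) →*
      Matrix (Fin (m * κ) → Bool) (Fin (m * κ) → Bool) ℂ :=
  ((reindexAlgEquiv ℂ ℂ (blockBits h d).symm : _ →* _)).comp piKronecker

lemma layer_apply (h : 0 < m * κ) (d : ℕ) (g : Fin κ → Matrix (Fin m → Bool) (Fin m → Bool) ℂ) :
    layer h d g = (piKronecker g).submatrix (blockBits h d) (blockBits h d) := rfl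

lemma embedBlock_blockPos (h : 0 < m * κ) (d : ℕ) (k : Fin κ)
    (A : Matrix (Fin m → Bool) (Fin m → Bool) ℂ) :
    embedBlock (blockPos m κ h d k) A = layer h d (Pi.mulSingle k A) := by
  ext x y
  have hrest : (∀ q, q ∉ Set.range (blockPos m κ h d k) → x q = y q) ↔
      ∀ l ∈ Finset.univ.erase k, blockBits h d x l = blockBits h d y l := by
    simp only [(blockPos_bijective h d).surjective.forall, Prod.forall, blockPos_mem_range_iff,
      Finset.mem_erase, Finset.mem_univ, and_true, blockBits_apply, funext_iff,
      Function.comp_apply]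
    exact ⟨fun hxy l hl t => hxy l t hl, fun hxy l t hl => hxy l hl t⟩
  have hother : ∀ l ∈ Finset.univ.erase k,
      (Pi.mulSingle k A : Fin κ → Matrix (Fin m → Bool) (Fin m → Bool) ℂ) l
          (blockBits h d x l) (blockBits h d y l)
        = if blockBits h d x l = blockBits h d y l then 1 else 0 := fun l hl => by
    rw [Pi.mulSingle_eq_of_ne (Finset.ne_of_mem_erase hl), one_apply]
  rw [layer_apply, submatrix_apply, piKronecker_apply,
    ← Finset.mul_prod_erase _ _ (Finset.mem_univ k), Finset.prod_congr rfl hother,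
    Finset.prod_boole, Pi.mulSingle_eq_same, mul_ite, mul_one, mul_zero]
  simp only [embedBlock, hrest]
  split_ifs <;> rfl

lemma foldl_mul_map_mulSingle {M N : Type*} [Monoid M] [Monoid N] (φ : (Fin κ → M) →* N)
    (g : Fin κ → M) :
    (List.finRange κ).foldl (fun a k => φ (Pi.mulSingle k (g k)) * a) 1 = φ g := by
  have hfin : (List.finRange κ).reverse.toFinset = Finset.univ := by
    simp only [List.toFinset_reverse, List.toFinset_finRange]
  calc (List.finRange κ).foldl (fun a k => φ (Pi.mulSingle k (g k)) * a) 1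
      = φ ((List.finRange κ).reverse.map fun k => Pi.mulSingle k (g k)).prod := by
        rw [map_list_prod, List.map_map, List.prod_eq_foldr, List.foldr_map, List.foldr_reverse]
        rfl
    _ = φ g := by
        rw [← Finset.noncommProd_toFinset _ _ (fun k _ l _ _ => Pi.mulSingle_apply_commute g k l)
          (List.nodup_reverse.mpr (List.nodup_finRange κ))]
        simp only [hfin, Finset.noncommProd_mulSingle]

lemma alaCircuit_succ (h : 0 < m * κ) (L : ℕ)
    (Ws : Fin (L + 1) → Fin κ → Matrix (Fin m → Bool) (Fin m → Bool) ℂ) :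
    alaCircuit m κ (L + 1) h Ws =
      layer h L (Ws (Fin.last L)) * alaCircuit m κ L h fun d => Ws d.castSucc := by
  simp only [alaCircuit, embedBlock_blockPos, foldl_mul_map_mulSingle, List.finRange_succ_last,
    List.foldl_append, List.foldl_map, List.foldl_cons, List.foldl_nil, Fin.val_last,
    Fin.val_castSucc]

lemma layer_mem_unitaryGroup (h : 0 < m * κ) (d : ℕ)
    (g : Fin κ → unitaryGroup (Fin m → Bool) ℂ) :
    layer h d (fun k => (g k).1) ∈ unitaryGroup (Fin (m * κ) → Bool) ℂ := by
  have hg := mem_unitaryGroup_iff.mp (piKronecker_mem_unitaryGroup g)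
  rw [mem_unitaryGroup_iff, layer_apply, star_eq_conjTranspose, conjTranspose_submatrix,
    submatrix_mul_equiv, ← star_eq_conjTranspose, hg, submatrix_one_equiv]

lemma alaCircuit_mem_unitaryGroup (h : 0 < m * κ) {L : ℕ}
    (Ws : Fin L → Fin κ → unitaryGroup (Fin m → Bool) ℂ) :
    alaCircuit m κ L h (fun d k => (Ws d k).1) ∈ unitaryGroup (Fin (m * κ) → Bool) ℂ := by
  induction L with
  | zero => exact one_mem _
  | succ L ih =>
    rw [alaCircuit_succ]
    exact mul_mem (layer_mem_unitaryGroup h L _) (ih _)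

lemma continuous_alaCircuit (h : 0 < m * κ) (L : ℕ) : Continuous (alaCircuit m κ L h) := by
  induction L with
  | zero => exact continuous_const
  | succ L ih =>
    rw [funext (alaCircuit_succ h L)]
    simp only [layer_apply]
    exact ((continuous_piKronecker.comp (continuous_apply _)).matrix_submatrix _ _).matrix_mul
      (ih.comp (by fun_prop))

end Circuit

section LastLayer

variable {m κ L : ℕ}

/-- The blocks `g` placed in the last layer, with trivial blocks in all other layers. -/
def lastLayerBlocks (L : ℕ) {G : Type*} [One G] (g : Fin κ → G) : Fin (L + 1) × Fin κ → G :=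
  fun p => if p.1 = Fin.last L then g p.2 else 1

lemma alaCircuit_lastLayerBlocks_mul (h : 0 < m * κ) (g : Fin κ → unitaryGroup (Fin m → Bool) ℂ)
    (Ws : Fin (L + 1) × Fin κ → unitaryGroup (Fin m → Bool) ℂ) :
    alaCircuit m κ (L + 1) h (fun d k => ((lastLayerBlocks L g * Ws) (d, k)).1) =
      layer h L (fun k => (g k).1) * alaCircuit m κ (L + 1) h fun d k => (Ws (d, k)).1 := by
  have hlast : (fun k => ((lastLayerBlocks L g * Ws) (Fin.last L, k)).1) =
      (fun k => (g k).1) * fun k => (Ws (Fin.last L, k)).1 := by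
    ext1 k
    simp only [lastLayerBlocks, Pi.mul_apply, if_true, Submonoid.coe_mul]
  have hinit (d : Fin L) (k : Fin κ) : (lastLayerBlocks L g * Ws) (d.castSucc, k)
      = Ws (d.castSucc, k) := by
    simp only [lastLayerBlocks, Pi.mul_apply, d.castSucc_ne_last, if_false, one_mul]
  simp only [alaCircuit_succ, hlast, hinit, map_mul, Matrix.mul_assoc]

variable [MeasurableSpace (unitaryGroup (Fin m → Bool) ℂ)]
  [BorelSpace (unitaryGroup (Fin m → Bool) ℂ)] (μ : Measure (unitaryGroup (Fin m → Bool) ℂ))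
  [μ.IsHaarMeasure] [IsProbabilityMeasure μ]
  {V ρ σ : Matrix (Fin (m * κ) → Bool) (Fin (m * κ) → Bool) ℂ}

lemma integral_fidelityKernel_layer_mul (hV : V ∈ unitaryGroup (Fin (m * κ) → Bool) ℂ)
    (h : 0 < m * κ) (d : ℕ) (hρ : ρ.PosSemidef) (hσ : σ.PosSemidef) :
    ∫ g, fidelityKernel (layer h d (fun k => (g k).1) * V) ρ σ ∂Measure.pi (fun _ => μ) =
      ρ.trace.re * σ.trace.re / 2 ^ (m * κ) := by
  have hVρ : (V * ρ * star V).PosSemidef := hρ.mul_mul_conjTranspose_same V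
  simp only [fidelityKernel_mul, layer_apply, fidelityKernel_submatrix]
  rw [integral_fidelityKernel_piKronecker μ (hVρ.submatrix _) (hσ.submatrix _)]
  simp only [trace_submatrix_equiv, trace_mul_mul_star_of_mem_unitaryGroup hV,
    Fintype.card_pi_const, Fintype.card_bool, Nat.cast_pow, Nat.cast_ofNat, pow_mul]

lemma integral_fidelityKernel_layer_mul_sq_le (hV : V ∈ unitaryGroup (Fin (m * κ) → Bool) ℂ)
    (h : 0 < m * κ) (d : ℕ) (hρ : ρ.PosSemidef) (hσ : σ.PosSemidef) :
    ∫ g, fidelityKernel (layer h d (fun k => (g k).1) * V) ρ σ ^ 2 ∂Measure.pi (fun _ => μ) ≤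
      2 ^ κ / (2 ^ (2 * m) - 1) ^ κ * (ρ.trace.re * σ.trace.re) ^ 2 := by
  have : Nonempty (Fin m) := ⟨0, Nat.pos_of_mul_pos_right h⟩
  have hVρ : (V * ρ * star V).PosSemidef := hρ.mul_mul_conjTranspose_same V
  have hsq := integral_fidelityKernel_piKronecker_sq_le μ (hVρ.submatrix (blockBits h d).symm)
    (hσ.submatrix (blockBits h d).symm)
  simpa only [fidelityKernel_mul, layer_apply, fidelityKernel_submatrix, trace_submatrix_equiv,
    trace_mul_mul_star_of_mem_unitaryGroup hV, Fintype.card_pi_const, Fintype.card_bool,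
    Nat.cast_pow, Nat.cast_ofNat, ← pow_mul, mul_comm m, div_pow] using hsq

variable (ρ σ) in
lemma integral_fidelityKernel_alaCircuit_pow (h : 0 < m * κ) (L r : ℕ) :
    ∫ Ws, fidelityKernel (alaCircuit m κ (L + 1) h fun d k => (Ws (d, k)).1) ρ σ ^ r
        ∂Measure.pi (fun _ : Fin (L + 1) × Fin κ => μ) =
      ∫ Ws, ∫ g, fidelityKernel (layer h L (fun k => (g k).1) *
          alaCircuit m κ (L + 1) h fun d k => (Ws (d, k)).1) ρ σ ^ r
          ∂Measure.pi (fun _ => μ) ∂Measure.pi (fun _ : Fin (L + 1) × Fin κ => μ) := by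
  have hcont : Continuous fun Ws : Fin (L + 1) × Fin κ → unitaryGroup (Fin m → Bool) ℂ =>
      fidelityKernel (alaCircuit m κ (L + 1) h fun d k => (Ws (d, k)).1) ρ σ ^ r :=
    ((continuous_fidelityKernel ρ σ).comp ((continuous_alaCircuit h _).comp (by fun_prop))).pow r
  have hlast : Continuous (lastLayerBlocks L : (Fin κ → unitaryGroup (Fin m → Bool) ℂ) → _) :=
    continuous_pi fun p => by
      unfold lastLayerBlocks
      split_ifs
      · fun_prop
      · exact continuous_const
  rw [integral_eq_integral_integral_mul (Measure.pi fun _ : Fin κ => μ) _ hlast hcont]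
  simp only [alaCircuit_lastLayerBlocks_mul]

lemma integral_fidelityKernel_alaCircuit (h : 0 < m * κ) (L : ℕ) (hρ : ρ.PosSemidef)
    (hσ : σ.PosSemidef) :
    ∫ Ws, fidelityKernel (alaCircuit m κ (L + 1) h fun d k => (Ws (d, k)).1) ρ σ
        ∂Measure.pi (fun _ : Fin (L + 1) × Fin κ => μ) =
      ρ.trace.re * σ.trace.re / 2 ^ (m * κ) := by
  have hpow := integral_fidelityKernel_alaCircuit_pow μ ρ σ h L 1
  simp only [pow_one] at hpow
  have hlayer (Ws : Fin (L + 1) × Fin κ → unitaryGroup (Fin m → Bool) ℂ) :=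
    integral_fidelityKernel_layer_mul μ
      (alaCircuit_mem_unitaryGroup h fun d k => Ws (d, k)) h L hρ hσ
  simp only [hpow, hlayer, integral_const, probReal_univ, one_smul]

lemma integral_fidelityKernel_alaCircuit_sq_le (h : 0 < m * κ) (L : ℕ) (hρ : ρ.PosSemidef)
    (hσ : σ.PosSemidef) :
    ∫ Ws, fidelityKernel (alaCircuit m κ (L + 1) h fun d k => (Ws (d, k)).1) ρ σ ^ 2
        ∂Measure.pi (fun _ : Fin (L + 1) × Fin κ => μ) ≤
      2 ^ κ / (2 ^ (2 * m) - 1) ^ κ * (ρ.trace.re * σ.trace.re) ^ 2 := by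
  rw [integral_fidelityKernel_alaCircuit_pow μ ρ σ]
  have hlayer (Ws : Fin (L + 1) × Fin κ → unitaryGroup (Fin m → Bool) ℂ) :=
    integral_fidelityKernel_layer_mul_sq_le μ
      (alaCircuit_mem_unitaryGroup h fun d k => Ws (d, k)) h L hρ hσ
  refine (integral_mono_of_nonneg (ae_of_all _ fun Ws => integral_nonneg fun g => sq_nonneg _)
    (integrable_const _) (ae_of_all _ hlayer)).trans_eq ?_
  simp only [integral_const, probReal_univ, one_smul]

end LastLayer

theorem ala_fidelity_kernel_variance_le_general {m κ L : ℕ} (h : 0 < m * κ) (hL : 0 < L)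
    [MeasurableSpace (unitaryGroup (Fin m → Bool) ℂ)]
    [BorelSpace (unitaryGroup (Fin m → Bool) ℂ)] (μ : Measure (unitaryGroup (Fin m → Bool) ℂ))
    [μ.IsHaarMeasure] [IsProbabilityMeasure μ]
    {ρ σ : Matrix (Fin (m * κ) → Bool) (Fin (m * κ) → Bool) ℂ} (hρ : ρ.PosSemidef)
    (hρtr : ρ.trace = 1) (hσ : σ.PosSemidef) (hσtr : σ.trace = 1) :
    (∫ Ws, fidelityKernel (alaCircuit m κ L h fun d k => (Ws (d, k)).1) ρ σ ^ 2
        ∂Measure.pi (fun _ : Fin L × Fin κ => μ)) -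
      (∫ Ws, fidelityKernel (alaCircuit m κ L h fun d k => (Ws (d, k)).1) ρ σ
        ∂Measure.pi (fun _ : Fin L × Fin κ => μ)) ^ 2 ≤
      2 ^ κ / (2 ^ (2 * m) - 1) ^ κ - 1 / 2 ^ (2 * (m * κ)) := by
  obtain ⟨L, rfl⟩ := Nat.exists_eq_add_one.mpr hL
  have hmean := integral_fidelityKernel_alaCircuit μ h L hρ hσ
  have hsq := integral_fidelityKernel_alaCircuit_sq_le μ h L hρ hσ
  simp only [hρtr, hσtr, Complex.one_re, mul_one, one_pow] at hmean hsq
  rw [hmean, div_pow, one_pow, ← pow_mul, mul_comm (m * κ) 2]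
  exact sub_le_sub_right hsq _

/-- For the alternating layered ansatz on `n = mκ` qubits with `L` layers
whose `m`-qubit blocks are independent Haar-random unitaries, the variance (over all blocks)
of the fidelity kernel `Tr[U ρ₀ U† σ]`, with `ρ₀` pure and `σ` a fixed density operator,
satisfies `Var[k_Q] ≤ 2^κ/(2^{2m}−1)^κ − 1/2^{2n}`. -/
theorem ala_fidelity_kernel_variance_le (m κ L : ℕ) (hm : 0 < m) (hκ : 0 < κ) (hL : 0 < L)
    [MeasurableSpace (Matrix.unitaryGroup (Fin m → Bool) ℂ)]
    [BorelSpace (Matrix.unitaryGroup (Fin m → Bool) ℂ)]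
    (μ : Measure (Matrix.unitaryGroup (Fin m → Bool) ℂ))
    [μ.IsHaarMeasure] [IsProbabilityMeasure μ]
    (ρ₀ σ : Matrix (Fin (m * κ) → Bool) (Fin (m * κ) → Bool) ℂ)
    (hρ : ρ₀.PosSemidef) (hρtr : ρ₀.trace = 1) (hρpure : ρ₀ * ρ₀ = ρ₀)
    (hσ : σ.PosSemidef) (hσtr : σ.trace = 1) :
    (∫ Ws : (Fin L × Fin κ) → Matrix.unitaryGroup (Fin m → Bool) ℂ,
        (((alaCircuit m κ L (Nat.mul_pos hm hκ) (fun d k => (Ws (d, k) : _)) * ρ₀ *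
            star (alaCircuit m κ L (Nat.mul_pos hm hκ) (fun d k => (Ws (d, k) : _))) *
            σ).trace).re) ^ 2
        ∂(Measure.pi fun _ : Fin L × Fin κ => μ))
      - (∫ Ws : (Fin L × Fin κ) → Matrix.unitaryGroup (Fin m → Bool) ℂ,
          (((alaCircuit m κ L (Nat.mul_pos hm hκ) (fun d k => (Ws (d, k) : _)) * ρ₀ *
              star (alaCircuit m κ L (Nat.mul_pos hm hκ) (fun d k => (Ws (d, k) : _))) *
              σ).trace).re)
          ∂(Measure.pi fun _ : Fin L × Fin κ => μ)) ^ 2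
      ≤ (2 : ℝ) ^ κ / ((2 : ℝ) ^ (2 * m) - 1) ^ κ - 1 / (2 : ℝ) ^ (2 * (m * κ)) :=
  ala_fidelity_kernel_variance_le_general (Nat.mul_pos hm hκ) hL μ hρ hρtr hσ hσtr
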